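/- arXiv:math/0506344 — 3 statements merged into one kernel-verified Lean document; each statement's English description precedes it below -/
import Mathlib

section
/- Let R be a commutative ring. Suppose given two short exact sequences of R-modules 0 → W' →^ι T →^g L → 0 and 0 → W →^{ι'} T' →^{g'} L' → 0, where L and L' are projective R-modules. Let Φ : T × T' → R be an R-bilinear form, and let e' : W' × L' → R and e : L × W → R be perfect R-bilinear pairings. Assume the compatibilities Φ(ι(w'), t') = e'(w', g'(t')) for all w' ∈ W', t' ∈ T', and Φ(t, ι'(w)) = e(g(t), w) for all t ∈ T, w ∈ W. Then Φ is a perfect pairing: both induced maps T → Hom_R(T', R) and T' → Hom_R(T, R) are bijective. -/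
theorem perfect_aux {R : Type*} [CommRing R]
    {W' T L W T' L' : Type*}
    [AddCommGroup W'] [AddCommGroup T] [AddCommGroup L]
    [AddCommGroup W] [AddCommGroup T'] [AddCommGroup L']
    [Module R W'] [Module R T] [Module R L]
    [Module R W] [Module R T'] [Module R L']
    [Module.Projective R L']
    (ι : W' →ₗ[R] T) (g : T →ₗ[R] L)
    (ι' : W →ₗ[R] T') (g' : T' →ₗ[R] L')
    (hg : Function.Surjective g)
    (hexact : LinearMap.range ι = LinearMap.ker g)
    (hg' : Function.Surjective g')
    (hexact' : LinearMap.range ι' = LinearMap.ker g')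
    (Φ : T →ₗ[R] T' →ₗ[R] R)
    (e' : W' →ₗ[R] L' →ₗ[R] R) (e : L →ₗ[R] W →ₗ[R] R)
    (he' : Function.Bijective e') (he : Function.Bijective e)
    (hcompat' : ∀ (w' : W') (t' : T'), Φ (ι w') t' = e' w' (g' t'))
    (hcompat : ∀ (t : T) (w : W), Φ t (ι' w) = e (g t) w) :
    Function.Bijective Φ := by
  constructor
  · rw [injective_iff_map_eq_zero]
    intro t ht
    have h1 : g t = 0 := by
      apply he.1
      ext w
      rw [← hcompat, ht]
      simp
    have h2 : t ∈ LinearMap.range ι := by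
      rw [hexact]
      exact h1
    obtain ⟨w', rfl⟩ := h2
    have h3 : w' = 0 := by
      apply he'.1
      ext l'
      obtain ⟨t', rfl⟩ := hg' l'
      rw [← hcompat', ht]
      simp
    rw [h3, map_zero]
  · intro f
    obtain ⟨l, hl⟩ := he.2 (f ∘ₗ ι')
    obtain ⟨t, rfl⟩ := hg l
    obtain ⟨s, hs⟩ := Module.projective_lifting_property g' LinearMap.id hg'
    obtain ⟨w', hw'⟩ := he'.2 ((f - Φ t) ∘ₗ s)
    refine ⟨t + ι w', ?_⟩
    ext t'
    have hk : t' - s (g' t') ∈ LinearMap.range ι' := by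
      rw [hexact', LinearMap.mem_ker, map_sub, sub_eq_zero]
      exact (LinearMap.congr_fun hs (g' t')).symm
    obtain ⟨w, hw⟩ := hk
    have h1 : Φ t (ι' w) = f (ι' w) := by
      rw [hcompat, hl]
      rfl
    rw [hw, map_sub, map_sub] at h1
    rw [map_add, LinearMap.add_apply, hcompat', hw']
    simp only [LinearMap.comp_apply, LinearMap.sub_apply]
    linear_combination h1

/-- Linear-algebra core of the perfectness of Deligne's pairing (Theorem 4.1):
given short exact sequences `0 → W' →ι T →g L → 0` and `0 → W →ι' T' →g' L' → 0`
of `R`-modules with `L, L'` projective, a bilinear form `Φ : T × T' → R`, and perfect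
pairings `e' : W' × L' → R`, `e : L × W → R` such that `Φ(ι w', t') = e'(w', g' t')`
and `Φ(t, ι' w) = e(g t, w)`, the pairing `Φ` is perfect. -/
theorem stmt_5 {R : Type*} [CommRing R]
    {W' T L W T' L' : Type*}
    [AddCommGroup W'] [AddCommGroup T] [AddCommGroup L]
    [AddCommGroup W] [AddCommGroup T'] [AddCommGroup L']
    [Module R W'] [Module R T] [Module R L]
    [Module R W] [Module R T'] [Module R L']
    [Module.Projective R L] [Module.Projective R L']
    (ι : W' →ₗ[R] T) (g : T →ₗ[R] L)
    (ι' : W →ₗ[R] T') (g' : T' →ₗ[R] L')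
    (hι : Function.Injective ι) (hg : Function.Surjective g)
    (hexact : LinearMap.range ι = LinearMap.ker g)
    (hι' : Function.Injective ι') (hg' : Function.Surjective g')
    (hexact' : LinearMap.range ι' = LinearMap.ker g')
    (Φ : T →ₗ[R] T' →ₗ[R] R)
    (e' : W' →ₗ[R] L' →ₗ[R] R) (e : L →ₗ[R] W →ₗ[R] R)
    (he' : Function.Bijective e' ∧ Function.Bijective e'.flip)
    (he : Function.Bijective e ∧ Function.Bijective e.flip)
    (hcompat' : ∀ (w' : W') (t' : T'), Φ (ι w') t' = e' w' (g' t'))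
    (hcompat : ∀ (t : T) (w : W), Φ t (ι' w) = e (g t) w) :
    Function.Bijective Φ ∧ Function.Bijective Φ.flip := by
  exact ⟨perfect_aux ι g ι' g' hg hexact hg' hexact' Φ e' e he'.1 he.1 hcompat' hcompat,
    perfect_aux ι' g' ι g hg' hexact' hg hexact Φ.flip e.flip e'.flip he.2 he'.2
      (fun w t => hcompat t w) (fun t' w' => hcompat' w' t')⟩
end

section
/- Let R be a commutative ring and A = R[x, t, t⁻¹] the Laurent polynomial ring in t over the polynomial ring R[x]. Let Ω_{A/R} be the module of Kähler differentials with universal derivation d, and let ω = f·dx + g·t⁻¹·dt ∈ Ω_{A/R} with f, g ∈ A. Let B = R[x, x', t, t⁻¹] and let μ, p₁, p₂ : A → B be the R-algebra homomorphisms fixing t and sending x to x + x', to x, and to x' respectively; let C = R[x, t, t⁻¹, s, s⁻¹] and let ν, q₁, q₂ : A → C be the R-algebra homomorphisms fixing x and sending t to t·s, to t, and to s respectively. If the induced maps on Kähler differentials satisfy μ*(ω) = p₁*(ω) + p₂*(ω) in Ω_{B/R} and ν*(ω) = q₁*(ω) + q₂*(ω) in Ω_{C/R}, then f = 0 and g is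 the image in A of a polynomial h ∈ R[X] satisfying h(X + Y) = h(X) + h(Y) in R[X, Y]; in particular ω = h(x)·t⁻¹·dt. -/
set_option synthInstance.maxHeartbeats 1000000
set_option maxHeartbeats 1000000

open LaurentPolynomial in
/-- The derivation of `A[T;T⁻¹]` sending `a T^n` to `(d a + n c a) T^n`. -/
noncomputable def laurentDer {R A : Type*} [CommRing R] [CommRing A] [Algebra R A]
    (d : Derivation R A A) (c : A) :
    Derivation R (LaurentPolynomial A) (LaurentPolynomial A) :=
  Derivation.mk'
    ((Finsupp.lsum R (fun n : ℤ =>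
      (AddMonoidAlgebra.coeffLinearEquiv R).symm.toLinearMap ∘ₗ
        Finsupp.lsingle (R := R) n ∘ₗ
        ((d : A →ₗ[R] A) + LinearMap.mulLeft R ((n : A) * c)))) ∘ₗ
      (AddMonoidAlgebra.coeffLinearEquiv R).toLinearMap) (by
    intro a b
    induction a using LaurentPolynomial.induction_on' with
    | add p q hp hq => rw [add_mul, map_add, hp, hq, map_add]; simp only [add_smul, smul_add]; abel
    | C_mul_T n a =>
      induction b using LaurentPolynomial.induction_on' with
      | add p q hp hq =>
        rw [mul_add, map_add, hp, hq, map_add]; simp only [add_smul, smul_add]; abel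
      | C_mul_T m b =>
        rw [← single_eq_C_mul_T, ← single_eq_C_mul_T, AddMonoidAlgebra.single_mul_single]
        have key : ∀ (k : ℤ) (e : A), ((Finsupp.lsum R (fun n : ℤ =>
            (AddMonoidAlgebra.coeffLinearEquiv R).symm.toLinearMap ∘ₗ
              Finsupp.lsingle (R := R) n ∘ₗ
              ((d : A →ₗ[R] A) + LinearMap.mulLeft R ((n : A) * c)))) ∘ₗ
            (AddMonoidAlgebra.coeffLinearEquiv R).toLinearMap)
              (AddMonoidAlgebra.single k e : LaurentPolynomial A) =
              AddMonoidAlgebra.single k (d e + k * c * e) := by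
          intro k e
          simp only [LinearMap.comp_apply, LinearEquiv.coe_coe,
            AddMonoidAlgebra.coeffLinearEquiv_apply, AddMonoidAlgebra.coeff_single,
            Finsupp.lsum_single, Finsupp.lsingle_apply]
          rfl
        rw [key, key, key, smul_eq_mul, smul_eq_mul, AddMonoidAlgebra.single_mul_single,
          AddMonoidAlgebra.single_mul_single, add_comm m n, ← AddMonoidAlgebra.single_add]
        congr 1
        simp only [Derivation.leibniz, smul_eq_mul]
        push_cast
        ring)

open LaurentPolynomial in
theorem laurentDer_single {R A : Type*} [CommRing R] [CommRing A] [Algebra R A]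
    (d : Derivation R A A) (c : A) (k : ℤ) (e : A) :
    laurentDer d c (AddMonoidAlgebra.single k e : LaurentPolynomial A) =
      AddMonoidAlgebra.single k (d e + k * c * e) := by
  unfold laurentDer
  rw [Derivation.coe_mk']
  simp only [LinearMap.comp_apply, LinearEquiv.coe_coe,
    AddMonoidAlgebra.coeffLinearEquiv_apply, AddMonoidAlgebra.coeff_single,
    Finsupp.lsum_single, Finsupp.lsingle_apply]
  rfl

open LaurentPolynomial in
theorem laurentDer_C {R A : Type*} [CommRing R] [CommRing A] [Algebra R A]
    (d : Derivation R A A) (c : A) (e : A) :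
    laurentDer d c (C e : LaurentPolynomial A) = C (d e) := by
  rw [← single_eq_C, laurentDer_single, ← single_eq_C]; simp

open LaurentPolynomial in
theorem laurentDer_T {R A : Type*} [CommRing R] [CommRing A] [Algebra R A]
    (d : Derivation R A A) (c : A) (k : ℤ) :
    laurentDer d c (T k : LaurentPolynomial A) = C (k * c) * T k := by
  rw [T, laurentDer_single, ← T, ← single_eq_C_mul_T]; simp

open LaurentPolynomial in
theorem map_T_eq {R A B : Type*} [CommRing R] [CommRing A] [CommRing B] [Algebra R A] [Algebra R B]
    (φ : LaurentPolynomial A →ₐ[R] B) (U : ℤ → B) (h0 : U 0 = 1)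
    (hU : ∀ m n, U (m + n) = U m * U n) (h1 : φ (T 1) = U 1) (n : ℤ) : φ (T n) = U n := by
  let F : Multiplicative ℤ →* B :=
    { toFun := fun k => φ (T k.toAdd)
      map_one' := by simp
      map_mul' := fun a b => by simp only [toAdd_mul, T_add, map_mul] }
  let G : Multiplicative ℤ →* B :=
    { toFun := fun k => U k.toAdd
      map_one' := by simpa using h0
      map_mul' := fun a b => by simp only [toAdd_mul, hU] }
  have : F = G := MonoidHom.ext_mint h1
  exact DFunLike.congr_fun this (Multiplicative.ofAdd n)

open LaurentPolynomial in
theorem map_C_eq {R B : Type*} [CommRing R] [CommRing B] [Algebra R B]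
    (φ : LaurentPolynomial (Polynomial R) →ₐ[R] B) (ψ : Polynomial R →ₐ[R] B)
    (h : φ (C Polynomial.X) = ψ Polynomial.X) (p : Polynomial R) : φ (C p) = ψ p := by
  have : φ.comp (AddMonoidAlgebra.singleZeroAlgHom (R := R) (A := Polynomial R) (M := ℤ)) = ψ :=
    Polynomial.algHom_ext h
  exact DFunLike.congr_fun this p

open LaurentPolynomial in
theorem map_CC_eq {R : Type*} [CommRing R]
    (φ : LaurentPolynomial (Polynomial R) →ₐ[R]
      LaurentPolynomial (LaurentPolynomial (Polynomial R)))
    (h : φ (C Polynomial.X) = C (C Polynomial.X)) (p : Polynomial R) : φ (C p) = C (C p) := by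
  let i₁ : Polynomial R →ₐ[R] LaurentPolynomial (Polynomial R) :=
    AddMonoidAlgebra.singleZeroAlgHom
  let i₂ : LaurentPolynomial (Polynomial R) →ₐ[R]
      LaurentPolynomial (LaurentPolynomial (Polynomial R)) :=
    AddMonoidAlgebra.singleZeroAlgHom
  exact map_C_eq (R := R) (B := LaurentPolynomial (LaurentPolynomial (Polynomial R))) φ (i₂.comp i₁) h p

open LaurentPolynomial in
/-- Example 4.1 of the paper (case `r = 1, d = 0`): let `A = R[x, t, t⁻¹]`,
`ω = f·dx + g·t⁻¹·dt` a differential form on `A` over `R`.  If `ω` satisfies the two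
horizontality conditions for the partial group laws (expressed via the `R`-algebra
homomorphisms `μ, p₁, p₂ : A → B = R[x, x', t, t⁻¹]` fixing `t` and sending `x` to
`x + x'`, `x`, `x'`, and `ν, q₁, q₂ : A → C = R[x, t, t⁻¹, s, s⁻¹]` fixing `x` and
sending `t` to `t·s`, `t`, `s`), then `f = 0` and `g = h(x)` for an additive
polynomial `h ∈ R[X]`; in particular `ω = h(x)·t⁻¹·dt`. -/
theorem stmt_6 {R : Type*} [CommRing R]
    (f g : LaurentPolynomial (Polynomial R))
    (μ p₁ p₂ : LaurentPolynomial (Polynomial R) →ₐ[R]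
      LaurentPolynomial (MvPolynomial (Fin 2) R))
    (hμx : μ (C Polynomial.X) = C (MvPolynomial.X 0) + C (MvPolynomial.X 1))
    (hμt : μ (T 1) = T 1)
    (hp₁x : p₁ (C Polynomial.X) = C (MvPolynomial.X 0)) (hp₁t : p₁ (T 1) = T 1)
    (hp₂x : p₂ (C Polynomial.X) = C (MvPolynomial.X 1)) (hp₂t : p₂ (T 1) = T 1)
    (ν q₁ q₂ : LaurentPolynomial (Polynomial R) →ₐ[R]
      LaurentPolynomial (LaurentPolynomial (Polynomial R)))
    (hνx : ν (C Polynomial.X) = C (C Polynomial.X)) (hνt : ν (T 1) = C (T 1) * T 1)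
    (hq₁x : q₁ (C Polynomial.X) = C (C Polynomial.X)) (hq₁t : q₁ (T 1) = C (T 1))
    (hq₂x : q₂ (C Polynomial.X) = C (C Polynomial.X)) (hq₂t : q₂ (T 1) = T 1)
    -- horizontality of `ν₁`: `μ*(ω) = p₁*(ω) + p₂*(ω)` in `Ω_{B/R}`
    (hhoriz₁ :
      μ f • KaehlerDifferential.D R _ (μ (C Polynomial.X)) +
          μ (g * T (-1)) • KaehlerDifferential.D R _ (μ (T 1)) =
        (p₁ f • KaehlerDifferential.D R _ (p₁ (C Polynomial.X)) +
            p₁ (g * T (-1)) • KaehlerDifferential.D R _ (p₁ (T 1))) +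
          (p₂ f • KaehlerDifferential.D R _ (p₂ (C Polynomial.X)) +
            p₂ (g * T (-1)) • KaehlerDifferential.D R _ (p₂ (T 1))))
    -- horizontality of `ν₂`: `ν*(ω) = q₁*(ω) + q₂*(ω)` in `Ω_{C/R}`
    (hhoriz₂ :
      ν f • KaehlerDifferential.D R _ (ν (C Polynomial.X)) +
          ν (g * T (-1)) • KaehlerDifferential.D R _ (ν (T 1)) =
        (q₁ f • KaehlerDifferential.D R _ (q₁ (C Polynomial.X)) +
            q₁ (g * T (-1)) • KaehlerDifferential.D R _ (q₁ (T 1))) +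
          (q₂ f • KaehlerDifferential.D R _ (q₂ (C Polynomial.X)) +
            q₂ (g * T (-1)) • KaehlerDifferential.D R _ (q₂ (T 1)))) :
    f = 0 ∧ ∃ h : Polynomial R,
      (Polynomial.aeval (MvPolynomial.X 0 + MvPolynomial.X 1 : MvPolynomial (Fin 2) R) h =
        Polynomial.aeval (MvPolynomial.X 0 : MvPolynomial (Fin 2) R) h +
          Polynomial.aeval (MvPolynomial.X 1 : MvPolynomial (Fin 2) R) h) ∧
      g = C h := by
  have h1 := congrArg (laurentDer (0 : Derivation R (MvPolynomial (Fin 2) R) _) 1).liftKaehlerDifferential hhoriz₁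
  have h2 := congrArg (laurentDer (0 : Derivation R (LaurentPolynomial (Polynomial R)) _) 1).liftKaehlerDifferential hhoriz₂
  have h3 := congrArg (laurentDer (laurentDer (Polynomial.derivative' : Derivation R (Polynomial R) _) 0) 0).liftKaehlerDifferential hhoriz₂
  clear hhoriz₁ hhoriz₂
  simp only [map_add, map_smul, Derivation.liftKaehlerDifferential_comp_D, hμx, hμt, hp₁x, hp₁t,
    hp₂x, hp₂t, hνx, hνt, hq₁x, hq₁t, hq₂x, hq₂t, laurentDer_C, laurentDer_T,
    Derivation.leibniz, smul_eq_mul, Derivation.zero_apply, map_zero, mul_zero, zero_mul,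
    add_zero, zero_add, Int.cast_one, mul_one, one_mul, map_one, Polynomial.derivative'_apply,
    Polynomial.derivative_X] at h1 h2 h3
  have hT : (T (-1) : LaurentPolynomial (Polynomial R)) * T 1 = 1 := by
    rw [← T_add]; simp
  have k1 : μ g = p₁ g + p₂ g := by
    have e : ∀ φ : LaurentPolynomial (Polynomial R) →ₐ[R]
        LaurentPolynomial (MvPolynomial (Fin 2) R), φ (T 1) = T 1 →
        φ (g * T (-1)) * T 1 = φ g := by
      intro φ h
      rw [← h, ← map_mul, mul_assoc, hT, mul_one]
    rwa [e _ hμt, e _ hp₁t, e _ hp₂t] at h1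
  have k2 : ν g = q₂ g := by
    have e1 : ν (g * T (-1)) * (C (T 1) * T 1) = ν g := by
      rw [← hνt, ← map_mul, mul_assoc, hT, mul_one]
    have e2 : q₂ (g * T (-1)) * T 1 = q₂ g := by
      rw [← hq₂t, ← map_mul, mul_assoc, hT, mul_one]
    rwa [e1, e2] at h2
  have cν : ∀ (a : LaurentPolynomial (Polynomial R)) (n m : ℤ),
      ((ν a).coeff n).coeff m = if m = n then a.coeff n else 0 := by
    intro a n m
    induction a using LaurentPolynomial.induction_on' with
    | add p q hp hq => 
      simp only [map_add, AddMonoidAlgebra.coeff_add, Finsupp.add_apply, hp, hq]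
      split_ifs <;> simp
    | C_mul_T k a =>
      rw [map_mul, map_CC_eq ν hνx, map_T_eq (R := R) (A := Polynomial R)
        (B := LaurentPolynomial (LaurentPolynomial (Polynomial R))) ν (fun k => C (T k) * T k) (by simp)
        (by intro m n; simp only [T_add, map_mul]; ring) hνt, ← mul_assoc, ← map_mul,
        ← single_eq_C_mul_T, ← single_eq_C_mul_T]
      simp only [AddMonoidAlgebra.coeff_single, Finsupp.single_apply]
      by_cases h : k = n
      · subst h
        simp [-single_eq_C_mul_T, AddMonoidAlgebra.coeff_single, Finsupp.single_apply, eq_comm]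
      · simp [h]
  have cq₂ : ∀ (a : LaurentPolynomial (Polynomial R)) (n m : ℤ),
      ((q₂ a).coeff n).coeff m = if m = 0 then a.coeff n else 0 := by
    intro a n m
    induction a using LaurentPolynomial.induction_on' with
    | add p q hp hq => 
      simp only [map_add, AddMonoidAlgebra.coeff_add, Finsupp.add_apply, hp, hq]
      split_ifs <;> simp
    | C_mul_T k a =>
      rw [map_mul, map_CC_eq q₂ hq₂x, map_T_eq (R := R) (A := Polynomial R)
        (B := LaurentPolynomial (LaurentPolynomial (Polynomial R))) q₂ (fun k => T k) (by simp)
        (by intro m n; simp only [T_add]) hq₂t, 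
        ← single_eq_C_mul_T, ← single_eq_C_mul_T]
      simp only [AddMonoidAlgebra.coeff_single, Finsupp.single_apply]
      by_cases h : k = n
      · subst h
        simp
      · simp [h]
  have cq₁ : ∀ (a : LaurentPolynomial (Polynomial R)) (n m : ℤ),
      ((q₁ a).coeff n).coeff m = if n = 0 then a.coeff m else 0 := by
    intro a n m
    induction a using LaurentPolynomial.induction_on' with
    | add p q hp hq => 
      simp only [map_add, AddMonoidAlgebra.coeff_add, Finsupp.add_apply, hp, hq]
      split_ifs <;> simp
    | C_mul_T k a =>
      rw [map_mul, map_CC_eq q₁ hq₁x, map_T_eq (R := R) (A := Polynomial R)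
        (B := LaurentPolynomial (LaurentPolynomial (Polynomial R))) q₁ (fun k => C (T k)) (by simp)
        (by intro m n; simp only [T_add, map_mul]) hq₁t, ← map_mul, C_apply]
      split_ifs <;> simp
  have hf : f = 0 := by
    ext1 n
    have := congrArg (fun z => (z.coeff n).coeff n) h3
    simp only [AddMonoidAlgebra.coeff_add, Finsupp.add_apply, cν, cq₁, cq₂, if_true] at this
    by_cases h : n = 0
    · simpa [h] using this
    · simpa [h] using this
  have hg : g = C (g.coeff 0) := by
    ext1 n
    have := congrArg (fun z => (z.coeff n).coeff n) k2
    simp only [cν, cq₂, if_true] at this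
    rw [C_apply, this]
    split_ifs with h
    · rw [h]
    · rfl
  refine ⟨hf, g.coeff 0, ?_, hg⟩
  rw [hg] at k1
  let ι : MvPolynomial (Fin 2) R →ₐ[R] LaurentPolynomial (MvPolynomial (Fin 2) R) :=
    AddMonoidAlgebra.singleZeroAlgHom
  have hι : ∀ a, ι a = C a := fun _ => rfl
  rw [map_C_eq μ (ι.comp (Polynomial.aeval (MvPolynomial.X 0 + MvPolynomial.X 1))) (by simp [hι, hμx]),
    map_C_eq p₁ (ι.comp (Polynomial.aeval (MvPolynomial.X 0))) (by simp [hι, hp₁x]),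
    map_C_eq p₂ (ι.comp (Polynomial.aeval (MvPolynomial.X 1))) (by simp [hι, hp₂x])] at k1
  simp only [AlgHom.comp_apply, hι] at k1
  have := congrArg (fun z => z.coeff 0) k1
  simpa using this
end

section
/- Let R be a commutative ring whose underlying additive group is torsion-free, and let A = R[x, t, t⁻¹] be the Laurent polynomial ring in t over the polynomial ring R[x]. Let ω = f·dx + g·t⁻¹·dt ∈ Ω_{A/R} with f, g ∈ A. Let B = R[x, x', t, t⁻¹] and let μ, p₁, p₂ : A → B be the R-algebra homomorphisms fixing t and sending x to x + x', to x, and to x' respectively; let C = R[x, t, t⁻¹, s, s⁻¹] and let ν, q₁, q₂ : A → C be the R-algebra homomorphisms fixing x and sending t to t·s, to t, and to s respectively. Assume μ*(ω) = p₁*(ω) + p₂*(ω) in Ω_{B/R} and ν*(ω) = q₁*(ω) + q₂*(ω) in Ω_{C/R}. If moreover the R-algebra homomorphism e₁ : A → R[t, t⁻¹] sending x to 1 and fixing t satisfies e₁*(ω) = t⁻¹·dt in Ω_{R[t,t⁻¹]/R}, then ω = x·t⁻¹·dt. -/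
set_option synthInstance.maxHeartbeats 1000000
set_option maxHeartbeats 1000000

open LaurentPolynomial in
/-- The additive map `a·Tⁿ ↦ (d a + c·n·a)·Tⁿ`. -/
noncomputable def lauLin {R S : Type*} [CommRing R] [CommRing S] [Algebra R S]
    (d : Derivation R S S) (c : ℤ) :
    LaurentPolynomial S →ₗ[R] LaurentPolynomial S where
  toFun p := AddMonoidAlgebra.ofCoeff (Finsupp.onFinset p.coeff.support
    (fun n => d (p.coeff n) + ((c * n : ℤ) : S) * p.coeff n) (by
      intro n hn
      rw [Finsupp.mem_support_iff]
      intro h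
      apply hn
      rw [h]
      simp))
  map_add' p q := by
    refine LaurentPolynomial.ext fun n => ?_
    simp
    ring
  map_smul' r p := by
    refine LaurentPolynomial.ext fun n => ?_
    simp

open LaurentPolynomial in
theorem lauLin_coeff {R S : Type*} [CommRing R] [CommRing S] [Algebra R S]
    (d : Derivation R S S) (c : ℤ) (p : LaurentPolynomial S) (n : ℤ) :
    (lauLin d c p).coeff n = d (p.coeff n) + ((c * n : ℤ) : S) * p.coeff n := rfl

open LaurentPolynomial in
theorem coeff_C_mul_T' {S : Type*} [CommRing S] (a : S) (m n : ℤ) :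
    (C a * T m : LaurentPolynomial S).coeff n = if m = n then a else 0 := by
  rw [← single_eq_C_mul_T, AddMonoidAlgebra.coeff_single, Finsupp.single_apply]

open LaurentPolynomial in
theorem lauLin_C_mul_T {R S : Type*} [CommRing R] [CommRing S] [Algebra R S]
    (d : Derivation R S S) (c : ℤ) (a : S) (m : ℤ) :
    lauLin d c (C a * T m) = C (d a + ((c * m : ℤ) : S) * a) * T m := by
  refine LaurentPolynomial.ext fun n => ?_
  rw [lauLin_coeff, coeff_C_mul_T', coeff_C_mul_T']
  split_ifs with h
  · rw [h]
  · simp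

open LaurentPolynomial in
/-- `lauLin` as a derivation. -/
noncomputable def lauDer {R S : Type*} [CommRing R] [CommRing S] [Algebra R S]
    (d : Derivation R S S) (c : ℤ) :
    Derivation R (LaurentPolynomial S) (LaurentPolynomial S) :=
  Derivation.mk' (lauLin d c) (by
    intro p q
    induction p using LaurentPolynomial.induction_on' with
    | add p p' hp hp' =>
      simp only [add_mul, map_add, hp, hp', smul_eq_mul, mul_add]
      ring
    | C_mul_T m a =>
      induction q using LaurentPolynomial.induction_on' with
      | add p p' hp hp' =>
        simp only [mul_add, map_add, hp, hp', smul_eq_mul, add_mul]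
        ring
      | C_mul_T n b =>
        have : (C b * T m * (C a * T n) : LaurentPolynomial S) = C (b * a) * T (m + n) := by
          rw [T_add, map_mul]; ring
        have h2 : (C a * T m * (C b * T n) : LaurentPolynomial S) = C (a * b) * T (m + n) := by
          rw [T_add, map_mul]; ring
        rw [h2, lauLin_C_mul_T, lauLin_C_mul_T, lauLin_C_mul_T, T_add]
        simp only [Derivation.leibniz, smul_eq_mul, map_add, map_mul, mul_add, Int.cast_mul,
          Int.cast_add]
        ring)

open LaurentPolynomial in
theorem lauDer_C {R S : Type*} [CommRing R] [CommRing S] [Algebra R S]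
    (d : Derivation R S S) (c : ℤ) (a : S) : lauDer d c (C a) = C (d a) := by
  have := lauLin_C_mul_T d c a 0
  change lauLin d c (C a) = _
  simpa using this

open LaurentPolynomial in
theorem lauDer_T {R S : Type*} [CommRing R] [CommRing S] [Algebra R S]
    (d : Derivation R S S) (c : ℤ) : lauDer d c (T 1) = C (c : S) * T 1 := by
  have := lauLin_C_mul_T d c 1 1
  change lauLin d c (T 1) = _
  simpa using this

open LaurentPolynomial in
theorem algHom_T_inv {R S B : Type*} [CommRing R] [CommRing S] [Algebra R S] [CommRing B]
    [Algebra R B] (φ : LaurentPolynomial S →ₐ[R] B) : φ (T (-1)) * φ (T 1) = 1 := by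
  rw [← map_mul, ← T_add]; simp

open LaurentPolynomial in
/-- Applying the derivation to a pulled-back form. -/
theorem der_form {R S B : Type*} [CommRing R] [CommRing S] [Algebra R S] [CommRing B]
    [Algebra R B] (φ : LaurentPolynomial S →ₐ[R] B) (δ : Derivation R B B)
    (f g : LaurentPolynomial S) (x : LaurentPolynomial S) (u v : B)
    (hu : δ (φ x) = u) (hv : δ (φ (T 1)) = v * φ (T 1)) :
    δ.liftKaehlerDifferential (φ f • KaehlerDifferential.D R _ (φ x) +
      φ (g * T (-1)) • KaehlerDifferential.D R _ (φ (T 1))) = φ f * u + φ g * v := by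
  rw [map_add, map_smul, map_smul, Derivation.liftKaehlerDifferential_comp_D,
    Derivation.liftKaehlerDifferential_comp_D, hu, hv, map_mul, smul_eq_mul, smul_eq_mul]
  linear_combination φ g * v * algHom_T_inv φ

open LaurentPolynomial in
theorem horiz {R S B : Type*} [CommRing R] [CommRing S] [Algebra R S] [CommRing B]
    [Algebra R B] (φ φ₁ φ₂ : LaurentPolynomial S →ₐ[R] B)
    (f g : LaurentPolynomial S) (x : LaurentPolynomial S)
    (h : φ f • KaehlerDifferential.D R _ (φ x) +
      φ (g * T (-1)) • KaehlerDifferential.D R _ (φ (T 1)) =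
      (φ₁ f • KaehlerDifferential.D R _ (φ₁ x) +
      φ₁ (g * T (-1)) • KaehlerDifferential.D R _ (φ₁ (T 1))) +
      (φ₂ f • KaehlerDifferential.D R _ (φ₂ x) +
      φ₂ (g * T (-1)) • KaehlerDifferential.D R _ (φ₂ (T 1))))
    (δ : Derivation R B B) (u v u₁ v₁ u₂ v₂ : B)
    (hu : δ (φ x) = u) (hv : δ (φ (T 1)) = v * φ (T 1))
    (hu₁ : δ (φ₁ x) = u₁) (hv₁ : δ (φ₁ (T 1)) = v₁ * φ₁ (T 1))
    (hu₂ : δ (φ₂ x) = u₂) (hv₂ : δ (φ₂ (T 1)) = v₂ * φ₂ (T 1)) :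
    φ f * u + φ g * v = (φ₁ f * u₁ + φ₁ g * v₁) + (φ₂ f * u₂ + φ₂ g * v₂) := by
  have := congrArg δ.liftKaehlerDifferential h
  rwa [map_add _ (_ + _) (_ + _), der_form φ δ f g _ u v hu hv,
    der_form φ₁ δ f g _ u₁ v₁ hu₁ hv₁, der_form φ₂ δ f g _ u₂ v₂ hu₂ hv₂] at this

theorem final_form {R B : Type*} [CommRing R] [CommRing B] [Algebra R B] (a b c x y : B)
    (ha : a = 0) (hb : b = c) :
    a • KaehlerDifferential.D R B x + b • KaehlerDifferential.D R B y =
      c • KaehlerDifferential.D R B y := by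
  rw [ha, hb, zero_smul, zero_add]

open LaurentPolynomial in
theorem lauDer_C_mul_T {R S : Type*} [CommRing R] [CommRing S] [Algebra R S]
    (d : Derivation R S S) (c : ℤ) (a : S) (h : d a = 0) :
    lauDer d c (C a * T 1) = C (c : S) * (C a * T 1) := by
  have := lauLin_C_mul_T d c a 1
  rw [h, zero_add, mul_one, map_mul C, mul_assoc] at this
  exact this

open LaurentPolynomial in
theorem algHom_C {R B : Type*} [CommRing R] [CommRing B] [Algebra R B]
    (φ : LaurentPolynomial (Polynomial R) →ₐ[R] B) (p : Polynomial R) :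
    φ (C p) = Polynomial.aeval (φ (C Polynomial.X)) p := by
  let ι : Polynomial R →ₐ[R] LaurentPolynomial (Polynomial R) :=
    { (C : Polynomial R →+* LaurentPolynomial (Polynomial R)) with
      commutes' := fun r => rfl }
  have : φ.comp ι = Polynomial.aeval (φ (C Polynomial.X)) := by
    apply Polynomial.algHom_ext
    rw [Polynomial.aeval_X]; rfl
  exact DFunLike.congr_fun this p

open LaurentPolynomial in
theorem algHom_C_C {R S : Type*} [CommRing R] [CommRing S] [Algebra R S]
    (φ : LaurentPolynomial (Polynomial R) →ₐ[R] LaurentPolynomial S) (y : S)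
    (h : φ (C Polynomial.X) = C y) (p : Polynomial R) :
    φ (C p) = C (Polynomial.aeval y p) := by
  let ι : S →ₐ[R] LaurentPolynomial S :=
    { (C : S →+* LaurentPolynomial S) with
      commutes' := fun r => rfl }
  rw [algHom_C, h]
  exact Polynomial.aeval_algHom_apply ι y p

open LaurentPolynomial in
/-- An algebra map sends `T n` to the `n`-th power of a unit. -/
theorem algHom_T {R S B : Type*} [CommRing R] [CommRing S] [Algebra R S] [CommRing B]
    [Algebra R B] (φ : LaurentPolynomial S →ₐ[R] B) (F : ℤ → B)
    (h0 : F 0 = 1) (hadd : ∀ m n, F (m + n) = F m * F n) (h1 : φ (T 1) = F 1) (n : ℤ) :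
    φ (T n) = F n := by
  have hm : F (-1) = φ (T (-1)) := by
    have e1 : F (-1) * F 1 = 1 := by rw [← hadd]; simpa using h0
    have e2 := algHom_T_inv φ
    rw [h1] at e2
    linear_combination φ (T (-1)) * e1 - F (-1) * e2
  induction n using Int.induction_on with
  | zero => rw [T_zero, map_one, h0]
  | succ i ih => rw [T_add, map_mul, ih, h1, hadd]
  | pred i ih => rw [sub_eq_add_neg, T_add, map_mul, ih, ← hm, hadd]

theorem poly_additive {R : Type*} [CommRing R]
    (htf : ∀ (n : ℕ), 0 < n → ∀ r : R, n • r = 0 → r = 0) (p : Polynomial R)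
    (h : Polynomial.aeval (MvPolynomial.X 0 + MvPolynomial.X 1 : MvPolynomial (Fin 2) R) p =
      Polynomial.aeval (MvPolynomial.X 0 : MvPolynomial (Fin 2) R) p +
      Polynomial.aeval (MvPolynomial.X 1 : MvPolynomial (Fin 2) R) p)
    (h1 : p.eval 1 = 1) : p = Polynomial.X := by
  have hd := congrArg (MvPolynomial.pderiv (R := R) (1 : Fin 2)) h
  rw [map_add, Derivation.map_aeval, Derivation.map_aeval, Derivation.map_aeval, map_add] at hd
  have hx0 : MvPolynomial.pderiv (R := R) (1 : Fin 2) (MvPolynomial.X 0) = 0 :=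
    MvPolynomial.pderiv_X_of_ne (by decide)
  have hx1 : MvPolynomial.pderiv (R := R) (1 : Fin 2) (MvPolynomial.X 1) = 1 :=
    MvPolynomial.pderiv_X_self _
  rw [hx0, hx1] at hd
  simp only [zero_add, smul_eq_mul, mul_one, mul_zero] at hd
  have key := congrArg (MvPolynomial.aeval (R := R) ![(Polynomial.X : Polynomial R), 0]) hd
  rw [← Polynomial.aeval_algHom_apply, ← Polynomial.aeval_algHom_apply] at key
  simp only [map_add, MvPolynomial.aeval_X, Matrix.cons_val_zero, Matrix.cons_val_one,
    add_zero] at key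
  rw [Polynomial.aeval_X_left_apply, ← Polynomial.coeff_zero_eq_aeval_zero'] at key
  have hz := congrArg (MvPolynomial.aeval (R := R) ![(0 : R), 0]) h
  rw [map_add, ← Polynomial.aeval_algHom_apply, ← Polynomial.aeval_algHom_apply,
    ← Polynomial.aeval_algHom_apply] at hz
  simp only [map_add, MvPolynomial.aeval_X, Matrix.cons_val_zero, Matrix.cons_val_one,
    add_zero] at hz
  have h0 : p.coeff 0 = 0 := by
    rw [← Polynomial.coeff_zero_eq_aeval_zero] at hz
    linear_combination -hz
  have hn : ∀ n, p.coeff (n + 2) = 0 := by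
    intro n
    have := congrArg (fun q => Polynomial.coeff q (n + 1)) key
    simp only [Polynomial.coeff_derivative, Polynomial.algebraMap_eq, Polynomial.coeff_C_succ]
      at this
    apply htf (n + 2) (by omega)
    rw [nsmul_eq_mul]
    push_cast at this ⊢
    linear_combination this
  have hp : p = Polynomial.C (p.coeff 1) * Polynomial.X := by
    ext n
    rcases n with _ | _ | n
    · simp [h0]
    · simp
    · rw [hn]
      simp
  rw [hp] at h1
  simp only [Polynomial.eval_mul, Polynomial.eval_C, Polynomial.eval_X, mul_one] at h1
  rw [hp, h1]
  simp

open LaurentPolynomial in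
theorem aeval_CX {R : Type*} [CommRing R] (p : Polynomial R) :
    Polynomial.aeval (C Polynomial.X : LaurentPolynomial (Polynomial R)) p = C p :=
  (algHom_C (AlgHom.id R (LaurentPolynomial (Polynomial R))) p).symm

open LaurentPolynomial in
theorem coeff_image {R : Type*} [CommRing R]
    (φ : LaurentPolynomial (Polynomial R) →ₐ[R]
      LaurentPolynomial (LaurentPolynomial (Polynomial R)))
    (hx : φ (C Polynomial.X) = C (C Polynomial.X))
    (G : ℤ → LaurentPolynomial (Polynomial R)) (hT : ∀ n, φ (T n) = C (G n) * T n)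
    (p : LaurentPolynomial (Polynomial R)) (n : ℤ) :
    (φ p).coeff n = C (p.coeff n) * G n := by
  induction p using LaurentPolynomial.induction_on' with
  | add p q hp hq =>
    rw [map_add, AddMonoidAlgebra.coeff_add, AddMonoidAlgebra.coeff_add, Finsupp.add_apply,
      Finsupp.add_apply, hp, hq, map_add, add_mul]
  | C_mul_T m a =>
    rw [map_mul, hT, algHom_C_C φ _ hx, aeval_CX, ← mul_assoc, ← map_mul, coeff_C_mul_T',
      coeff_C_mul_T']
    split_ifs with h
    · rw [h]
    · simp

open LaurentPolynomial in
theorem image_const {R : Type*} [CommRing R]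
    (φ : LaurentPolynomial (Polynomial R) →ₐ[R]
      LaurentPolynomial (LaurentPolynomial (Polynomial R)))
    (hx : φ (C Polynomial.X) = C (C Polynomial.X)) (hT : φ (T 1) = C (T 1))
    (p : LaurentPolynomial (Polynomial R)) : φ p = C p := by
  induction p using LaurentPolynomial.induction_on' with
  | add p q hp hq => rw [map_add, hp, hq, map_add]
  | C_mul_T m a =>
    rw [map_mul, algHom_T φ (fun n => (C (T n) : LaurentPolynomial (LaurentPolynomial (Polynomial R)))) (by simp) (fun m n => by rw [T_add, map_mul]) hT,
      algHom_C_C φ _ hx, aeval_CX, map_mul]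

open LaurentPolynomial in
/-- Example 4.1 of the paper: over a ring `R` with torsion-free additive group, a
differential form `ω = f·dx + g·t⁻¹·dt` on `A = R[x, t, t⁻¹]` satisfying the two
horizontality conditions for the partial group laws (via the `R`-algebra maps
`μ, p₁, p₂ : A → B = R[x, x', t, t⁻¹]` fixing `t` and sending `x` to `x + x'`, `x`,
`x'`, and `ν, q₁, q₂ : A → C = R[x, t, t⁻¹, s, s⁻¹]` fixing `x` and sending `t` to
`t·s`, `t`, `s`), and pulling back to `t⁻¹·dt` along the map `e₁ : A → R[t, t⁻¹]`
sending `x` to `1`, equals `x·t⁻¹·dt`. -/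
theorem stmt_7 {R : Type*} [CommRing R]
    (htf : ∀ (n : ℕ), 0 < n → ∀ r : R, n • r = 0 → r = 0)
    (f g : LaurentPolynomial (Polynomial R))
    (μ p₁ p₂ : LaurentPolynomial (Polynomial R) →ₐ[R]
      LaurentPolynomial (MvPolynomial (Fin 2) R))
    (hμx : μ (C Polynomial.X) = C (MvPolynomial.X 0) + C (MvPolynomial.X 1))
    (hμt : μ (T 1) = T 1)
    (hp₁x : p₁ (C Polynomial.X) = C (MvPolynomial.X 0)) (hp₁t : p₁ (T 1) = T 1)
    (hp₂x : p₂ (C Polynomial.X) = C (MvPolynomial.X 1)) (hp₂t : p₂ (T 1) = T 1)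
    (ν q₁ q₂ : LaurentPolynomial (Polynomial R) →ₐ[R]
      LaurentPolynomial (LaurentPolynomial (Polynomial R)))
    (hνx : ν (C Polynomial.X) = C (C Polynomial.X)) (hνt : ν (T 1) = C (T 1) * T 1)
    (hq₁x : q₁ (C Polynomial.X) = C (C Polynomial.X)) (hq₁t : q₁ (T 1) = C (T 1))
    (hq₂x : q₂ (C Polynomial.X) = C (C Polynomial.X)) (hq₂t : q₂ (T 1) = T 1)
    -- horizontality of `ν₁`: `μ*(ω) = p₁*(ω) + p₂*(ω)` in `Ω_{B/R}`
    (hhoriz₁ :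
      μ f • KaehlerDifferential.D R _ (μ (C Polynomial.X)) +
          μ (g * T (-1)) • KaehlerDifferential.D R _ (μ (T 1)) =
        (p₁ f • KaehlerDifferential.D R _ (p₁ (C Polynomial.X)) +
            p₁ (g * T (-1)) • KaehlerDifferential.D R _ (p₁ (T 1))) +
          (p₂ f • KaehlerDifferential.D R _ (p₂ (C Polynomial.X)) +
            p₂ (g * T (-1)) • KaehlerDifferential.D R _ (p₂ (T 1))))
    -- horizontality of `ν₂`: `ν*(ω) = q₁*(ω) + q₂*(ω)` in `Ω_{C/R}`
    (hhoriz₂ :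
      ν f • KaehlerDifferential.D R _ (ν (C Polynomial.X)) +
          ν (g * T (-1)) • KaehlerDifferential.D R _ (ν (T 1)) =
        (q₁ f • KaehlerDifferential.D R _ (q₁ (C Polynomial.X)) +
            q₁ (g * T (-1)) • KaehlerDifferential.D R _ (q₁ (T 1))) +
          (q₂ f • KaehlerDifferential.D R _ (q₂ (C Polynomial.X)) +
            q₂ (g * T (-1)) • KaehlerDifferential.D R _ (q₂ (T 1))))
    (e₁ : LaurentPolynomial (Polynomial R) →ₐ[R] LaurentPolynomial R)
    (he₁x : e₁ (C Polynomial.X) = 1) (he₁t : e₁ (T 1) = T 1)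
    -- `e₁*(ω) = t⁻¹·dt` in `Ω_{R[t,t⁻¹]/R}`
    (hpull :
      e₁ f • KaehlerDifferential.D R _ (e₁ (C Polynomial.X)) +
          e₁ (g * T (-1)) • KaehlerDifferential.D R _ (e₁ (T 1)) =
        (T (-1) : LaurentPolynomial R) •
          KaehlerDifferential.D R (LaurentPolynomial R) (T 1)) :
    f • KaehlerDifferential.D R (LaurentPolynomial (Polynomial R))
          (C Polynomial.X : LaurentPolynomial (Polynomial R)) +
        (g * T (-1)) • KaehlerDifferential.D R (LaurentPolynomial (Polynomial R))
          (T 1 : LaurentPolynomial (Polynomial R)) =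
      ((C Polynomial.X * T (-1) : LaurentPolynomial (Polynomial R))) •
        KaehlerDifferential.D R (LaurentPolynomial (Polynomial R))
          (T 1 : LaurentPolynomial (Polynomial R)) := by
  have hh := horiz (B := LaurentPolynomial (LaurentPolynomial (Polynomial R)))
    (S := Polynomial R) ν q₁ q₂ f g (C Polynomial.X) (by
      refine Eq.trans ?_ (hhoriz₂.trans ?_)
      · refine congrArg₂ (· + ·) ?_ ?_
        · exact rfl
        · exact rfl
      · refine congrArg₂ (· + ·) (congrArg₂ (· + ·) ?_ ?_) (congrArg₂ (· + ·) ?_ ?_)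
        · exact rfl
        · exact rfl
        · exact rfl
        · exact rfl)
  have hνT : ∀ n, ν (T n) = C (T n) * T n := algHom_T ν (fun n => (C (T n) * T n : LaurentPolynomial (LaurentPolynomial (Polynomial R)))) (by simp)
    (fun m n => by rw [T_add, T_add, map_mul]; ring) hνt
  have hq₂T : ∀ n, q₂ (T n) = C 1 * T n := algHom_T q₂ (fun n => (C 1 * T n : LaurentPolynomial (LaurentPolynomial (Polynomial R)))) (by simp)
    (fun m n => by rw [T_add, map_one, one_mul, one_mul, one_mul]) (by simpa using hq₂t)
  have hνc := coeff_image ν hνx _ hνT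
  have hq₂c := coeff_image q₂ hq₂x _ hq₂T
  -- `f = 0`
  have hf : f = 0 := by
    let d₀ : Derivation R (Polynomial R) (Polynomial R) := Polynomial.derivative'
    let δ : Derivation R (LaurentPolynomial (LaurentPolynomial (Polynomial R)))
      (LaurentPolynomial (LaurentPolynomial (Polynomial R))) := lauDer (lauDer d₀ 0) 0
    have hδx : δ (C (C Polynomial.X)) = 1 := by
      simp [δ, d₀, lauDer_C]
    have hδt : δ (C (T 1)) = 0 := by
      simp [δ, d₀, lauDer_C, lauDer_T]
    have hδs : δ (T 1) = 0 := by
      simp [δ, d₀, lauDer_T]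
    have hδts : δ (C (T 1) * T 1) = 0 := by
      have := lauDer_C_mul_T (lauDer d₀ 0) 0 (T 1) (by simp [lauDer_T])
      simpa [δ] using this
    have := hh δ 1 0 1 0 1 0
      (by rw [hνx, hδx])
      (by rw [hνt, hδts, zero_mul])
      (by rw [hq₁x, hδx]) (by rw [hq₁t, hδt, zero_mul])
      (by rw [hq₂x, hδx]) (by rw [hq₂t, hδs, zero_mul])
    · rw [image_const q₁ hq₁x hq₁t f] at this
      have h0 := congrArg (fun p => p.coeff 0) this
      simp only [mul_one, mul_zero, add_zero, AddMonoidAlgebra.coeff_add, Finsupp.add_apply,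
        hνc, hq₂c, T_zero, C_apply, if_true] at h0
      linear_combination -h0
  -- `g` is constant in `t`
  have hg : g = C (g.coeff 0) := by
    let δ : Derivation R (LaurentPolynomial (LaurentPolynomial (Polynomial R)))
      (LaurentPolynomial (LaurentPolynomial (Polynomial R))) := lauDer 0 1
    have hδx : ∀ a, δ (C a) = 0 := by
      simp [δ, lauDer_C]
    have hδs : δ (T 1) = T 1 := by
      simp [δ, lauDer_T]
    have hδts : δ (C (T 1) * T 1) = C (T 1) * T 1 := by
      have := lauDer_C_mul_T (0 : Derivation R (LaurentPolynomial (Polynomial R))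
        (LaurentPolynomial (Polynomial R))) 1 (T 1) (by simp)
      simpa only [δ, Int.cast_one, map_one, one_mul] using this
    have := hh δ 0 1 0 0 0 1
      (by rw [hνx, hδx])
      (by rw [hνt, hδts, one_mul])
      (by rw [hq₁x, hδx]) (by rw [hq₁t, hδx, zero_mul])
      (by rw [hq₂x, hδx]) (by rw [hq₂t, hδs, one_mul])
    · refine LaurentPolynomial.ext fun n => ?_
      rw [C_apply]
      split_ifs with hn
      · rw [hn]
      have h0 := congrArg (fun p => (p.coeff n).coeff n) this
      simp only [mul_one, mul_zero, add_zero, zero_add, hνc, hq₂c, coeff_C_mul_T', if_true,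
        C_apply, if_neg hn] at h0
      exact h0
  obtain ⟨p, hp⟩ : ∃ p, g = C p := ⟨_, hg⟩
  have hadd : μ g = p₁ g + p₂ g := by
    let δ : Derivation R (LaurentPolynomial (MvPolynomial (Fin 2) R))
      (LaurentPolynomial (MvPolynomial (Fin 2) R)) := lauDer 0 1
    have hδx : ∀ a, δ (C a) = 0 := by
      simp [δ, lauDer_C]
    have hδs : δ (T 1) = T 1 := by
      simp [δ, lauDer_T]
    have := congrArg δ.liftKaehlerDifferential hhoriz₁
    rw [map_add _ (_ + _) (_ + _), der_form μ δ f g _ 0 1, der_form p₁ δ f g _ 0 1,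
      der_form p₂ δ f g _ 0 1] at this
    · simpa using this
    · rw [hp₂x, hδx]
    · rw [hp₂t, hδs, one_mul]
    · rw [hp₁x, hδx]
    · rw [hp₁t, hδs, one_mul]
    · rw [hμx, ← map_add, hδx]
    · rw [hμt, hδs, one_mul]
  have hone : e₁ g = 1 := by
    let δ : Derivation R (LaurentPolynomial R) (LaurentPolynomial R) := lauDer 0 1
    have hδs : δ (T 1) = T 1 := by
      simp [δ, lauDer_T]
    have := congrArg δ.liftKaehlerDifferential hpull
    rw [der_form e₁ δ f g _ 0 1, map_smul, Derivation.liftKaehlerDifferential_comp_D, hδs,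
      smul_eq_mul, ← T_add] at this
    · simpa using this
    · rw [he₁x]; simp
    · rw [he₁t, hδs, one_mul]
  have hCinj : ∀ {S : Type _} [CommRing S] (a b : S),
      (C a : LaurentPolynomial S) = C b → a = b := by
    intro S _ a b h
    simpa using congrArg (fun p => p.coeff 0) h
  have hpX : p = Polynomial.X := by
    apply poly_additive htf
    · rw [hp, algHom_C_C μ _ (by rw [hμx, ← map_add]), algHom_C_C p₁ _ hp₁x,
        algHom_C_C p₂ _ hp₂x, ← map_add] at hadd
      exact hCinj _ _ hadd
    · rw [hp, algHom_C_C e₁ 1 (by simpa using he₁x)] at hone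
      have := hCinj _ _ (hone.trans (map_one C).symm)
      simpa [Polynomial.aeval_def, Polynomial.eval₂_id] using this
  exact final_form _ _ _ _ _ hf (by rw [hp, hpX])
end
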